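/- Let A be an abelian category and ε ≥ 0. The category Inter_ε(A), whose objects are ε-interleavings (F, G, φ, ψ) of diagrams F, G : (ℝ,≤) → A and whose morphisms (F,G,φ,ψ) → (F',G',φ',ψ') are pairs of natural transformations (α : F ⇒ F', β : G ⇒ G') satisfying φ'∘α = (βT_ε)∘φ and ψ'∘β = (αT_ε)∘ψ, is an abelian category. -/

import Mathlib

/-!
An `ε`-interleaving in `A` is the same thing as a diagram in `A` indexed by a preorder: take two
copies of `ℝ`, with `p ≤ q` inside one copy as usual and, between distinct copies, `a ≤ b` exactly
when `a + ε ≤ b` holds in `ℝ` (transitivity uses `0 ≤ ε`). The components of `φ` and `ψ` are the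
images of the relations `a ≤ a + ε` between the copies; their naturality squares and the two
triangle identities express functoriality. So `Inter_ε(A)` is equivalent to a functor category
`P ⥤ A`, which is abelian, and the abelian structure is carried across the equivalence.
-/

open CategoryTheory

universe u v

/-- The translation functor `a ↦ a + ε` on the poset category `(ℝ, ≤)`. -/
noncomputable def Tr (ε : ℝ) : ℝ ⥤ ℝ :=
  Monotone.functor (f := fun a => a + ε) (fun _ _ h => by simpa using h)

/-- An `ε`-interleaving of `(ℝ,≤)`-indexed diagrams `F` and `G` in a category `D`:
natural transformations `φ : F ⇒ G ∘ T_ε` and `ψ : G ⇒ F ∘ T_ε` (given componentwise,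
together with their naturality squares) such that the two triangle identities
`ψ(a+ε) ∘ φ(a) = F(a ≤ a+2ε)` and `φ(a+ε) ∘ ψ(a) = G(a ≤ a+2ε)` hold. Requires `0 ≤ ε`. -/
structure Interleaving {D : Type u} [Category.{v} D] (ε : ℝ) (F G : ℝ ⥤ D) where
  hε : 0 ≤ ε
  φ : ∀ a : ℝ, F.obj a ⟶ G.obj (a + ε)
  ψ : ∀ a : ℝ, G.obj a ⟶ F.obj (a + ε)
  natφ : ∀ (a b : ℝ) (h : a ≤ b),
    F.map (homOfLE h) ≫ φ b = φ a ≫ G.map (homOfLE (by linarith : a + ε ≤ b + ε))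
  natψ : ∀ (a b : ℝ) (h : a ≤ b),
    G.map (homOfLE h) ≫ ψ b = ψ a ≫ F.map (homOfLE (by linarith : a + ε ≤ b + ε))
  triφ : ∀ a : ℝ,
    φ a ≫ ψ (a + ε) = F.map (homOfLE (by linarith : a ≤ a + ε + ε))
  triψ : ∀ a : ℝ,
    ψ a ≫ φ (a + ε) = G.map (homOfLE (by linarith : a ≤ a + ε + ε))

/-- `F` and `G` are `ε`-interleaved if an `ε`-interleaving exists. -/
def Interleaved {D : Type u} [Category.{v} D] (ε : ℝ) (F G : ℝ ⥤ D) : Prop :=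
  Nonempty (Interleaving ε F G)

/-- The interleaving distance between two `(ℝ,≤)`-indexed diagrams, an extended
nonnegative real number; it is `∞` if `F` and `G` are not `ε`-interleaved for any `ε ≥ 0`. -/
noncomputable def interleavingDist {D : Type u} [Category.{v} D] (F G : ℝ ⥤ D) : ENNReal :=
  sInf (ENNReal.ofReal '' {ε : ℝ | Interleaved ε F G})

/-- An object of the category `Inter_ε(A)`: an `ε`-interleaving `(F, G, φ, ψ)` of
`(ℝ,≤)`-indexed diagrams in `A`. -/
structure InterObj (ε : ℝ) (A : Type u) [Category.{v} A] where
  F : ℝ ⥤ A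
  G : ℝ ⥤ A
  inter : Interleaving ε F G

/-- A morphism of `ε`-interleavings: a pair of natural transformations
`(α : F ⇒ F', β : G ⇒ G')` compatible with the interleavings, i.e.
`φ' ∘ α = (β T_ε) ∘ φ` and `ψ' ∘ β = (α T_ε) ∘ ψ`. -/
@[ext]
structure InterHom {ε : ℝ} {A : Type u} [Category.{v} A] (X Y : InterObj ε A) where
  α : X.F ⟶ Y.F
  β : X.G ⟶ Y.G
  commφ : ∀ a : ℝ, α.app a ≫ Y.inter.φ a = X.inter.φ a ≫ β.app (a + ε)
  commψ : ∀ a : ℝ, β.app a ≫ Y.inter.ψ a = X.inter.ψ a ≫ α.app (a + ε)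

/-- The category `Inter_ε(A)` of `ε`-interleavings of `(ℝ,≤)`-indexed diagrams in `A`,
with componentwise composition and identities. -/
instance interCategory (ε : ℝ) (A : Type u) [Category.{v} A] :
    Category (InterObj ε A) where
  Hom X Y := InterHom X Y
  id X :=
    { α := 𝟙 X.F
      β := 𝟙 X.G
      commφ := by intro a; simp
      commψ := by intro a; simp }
  comp {X Y Z} f g :=
    { α := f.α ≫ g.α
      β := f.β ≫ g.β
      commφ := by
        intro a
        simp only [NatTrans.comp_app, Category.assoc, g.commφ]
        rw [← Category.assoc, f.commφ, Category.assoc]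
      commψ := by
        intro a
        simp only [NatTrans.comp_app, Category.assoc, g.commψ]
        rw [← Category.assoc, f.commψ, Category.assoc] }
  id_comp f := by
    apply InterHom.ext <;> simp
  comp_id f := by
    apply InterHom.ext <;> simp
  assoc f g h := by
    apply InterHom.ext <;> simp

open scoped NNReal

namespace InterAbelian

/-- The underlying set of the interleaving preorder: two disjoint copies of `ℝ`. The shift `ε` is
a nonnegative real so that the preorder structure can be an instance. -/
inductive Pt (ε : ℝ≥0) : Type
  | l (a : ℝ) : Pt ε
  | r (a : ℝ) : Pt ε

/-- The order relation of the interleaving preorder: crossing between the copies costs `ε`. -/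
def Pt.le {ε : ℝ≥0} : Pt ε → Pt ε → Prop
  | .l a, .l b => a ≤ b
  | .r a, .r b => a ≤ b
  | .l a, .r b => a + ε ≤ b
  | .r a, .l b => a + ε ≤ b

instance (ε : ℝ≥0) : Preorder (Pt ε) where
  le := Pt.le
  le_refl p := by cases p <;> exact le_refl (α := ℝ) _
  le_trans p q s := by
    have hε : (0 : ℝ) ≤ ε := ε.2
    cases p <;> cases q <;> cases s <;> simp only [Pt.le] <;> intros <;> linarith

variable {ε : ℝ≥0} {A : Type u} [Category.{v} A]

theorem ll {a b : ℝ} (h : a ≤ b) : (Pt.l a : Pt ε) ≤ Pt.l b := h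
theorem rr {a b : ℝ} (h : a ≤ b) : (Pt.r a : Pt ε) ≤ Pt.r b := h
theorem lr {a b : ℝ} (h : a + ε ≤ b) : (Pt.l a : Pt ε) ≤ Pt.r b := h
theorem rl {a b : ℝ} (h : a + ε ≤ b) : (Pt.r a : Pt ε) ≤ Pt.l b := h

/-- The interleaving underlying a diagram on the interleaving preorder: restrict to the two
copies of `ℝ`, and take the crossing maps as `φ` and `ψ`. -/
def toInter (H : Pt ε ⥤ A) : InterObj (ε : ℝ) A where
  F :=
    { obj := fun a => H.obj (.l a)
      map := fun f => H.map (homOfLE (ll (leOfHom f)))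
      map_id := fun a => H.map_id _
      map_comp := fun f g => by rw [← H.map_comp]; rfl }
  G :=
    { obj := fun a => H.obj (.r a)
      map := fun f => H.map (homOfLE (rr (leOfHom f)))
      map_id := fun a => H.map_id _
      map_comp := fun f g => by rw [← H.map_comp]; rfl }
  inter :=
    { hε := ε.2
      φ := fun a => H.map (homOfLE (lr le_rfl))
      ψ := fun a => H.map (homOfLE (rl le_rfl))
      natφ := fun a b h => by dsimp only; rw [← H.map_comp, ← H.map_comp]; rfl
      natψ := fun a b h => by dsimp only; rw [← H.map_comp, ← H.map_comp]; rfl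
      triφ := fun a => by dsimp only; rw [← H.map_comp]; rfl
      triψ := fun a => by dsimp only; rw [← H.map_comp]; rfl }

variable (ε A) in
/-- The comparison functor from diagrams on the interleaving preorder to interleavings. -/
def compare : (Pt ε ⥤ A) ⥤ InterObj (ε : ℝ) A where
  obj := toInter
  map η :=
    { α := { app := fun a => η.app (.l a), naturality := fun _ _ _ => η.naturality _ }
      β := { app := fun a => η.app (.r a), naturality := fun _ _ _ => η.naturality _ }
      commφ := fun _ => (η.naturality _).symm
      commψ := fun _ => (η.naturality _).symm }
  map_id _ := rfl
  map_comp _ _ := rfl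

instance : (compare ε A).Faithful where
  map_injective {H K η θ} h := by
    ext p
    cases p with
    | l a => exact congrArg (fun f : InterHom _ _ => f.α.app a) h
    | r a => exact congrArg (fun f : InterHom _ _ => f.β.app a) h

/-- The components of a morphism of interleavings, collected over the interleaving preorder. -/
def component {H K : Pt ε ⥤ A} (f : InterHom (toInter H) (toInter K)) :
    ∀ p : Pt ε, H.obj p ⟶ K.obj p
  | .l a => f.α.app a
  | .r a => f.β.app a

/-- Every crossing relation factors as the minimal crossing `a ≤ a + ε` followed by a relation
within one copy, so naturality there follows from the two conditions on a morphism. -/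
theorem component_naturality {H K : Pt ε ⥤ A} (f : InterHom (toInter H) (toInter K))
    {p q : Pt ε} (h : p ⟶ q) : H.map h ≫ component f q = component f p ≫ K.map h := by
  cases p with
  | l a =>
    cases q with
    | l b => exact f.α.naturality (homOfLE (show a ≤ b from leOfHom h))
    | r b =>
      have hab : a + ε ≤ b := leOfHom h
      have e : h = homOfLE (lr le_rfl) ≫ homOfLE (rr hab) := rfl
      rw [e, H.map_comp, K.map_comp, Category.assoc]
      have h1 := f.commφ a
      have h2 := f.β.naturality (homOfLE hab)
      dsimp [toInter] at h1 h2
      dsimp only [component]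
      rw [h2, reassoc_of% h1]
  | r a =>
    cases q with
    | r b => exact f.β.naturality (homOfLE (show a ≤ b from leOfHom h))
    | l b =>
      have hab : a + ε ≤ b := leOfHom h
      have e : h = homOfLE (rl le_rfl) ≫ homOfLE (ll hab) := rfl
      rw [e, H.map_comp, K.map_comp, Category.assoc]
      have h1 := f.commψ a
      have h2 := f.α.naturality (homOfLE hab)
      dsimp [toInter] at h1 h2
      dsimp only [component]
      rw [h2, reassoc_of% h1]

instance : (compare ε A).Full where
  map_surjective f := ⟨{ app := component f, naturality := fun _ _ h => component_naturality f h },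
    rfl⟩

/-- The values on objects of the diagram associated with an interleaving. -/
def diagObj (X : InterObj (ε : ℝ) A) : Pt ε → A
  | .l a => X.F.obj a
  | .r a => X.G.obj a

/-- The transition maps of the diagram associated with an interleaving; a crossing relation is
sent to `φ` or `ψ` followed by a transition map of the target. -/
def diagMap (X : InterObj (ε : ℝ) A) : ∀ p q : Pt ε, p ≤ q → (diagObj X p ⟶ diagObj X q)
  | .l _, .l _, h => X.F.map (homOfLE h)
  | .r _, .r _, h => X.G.map (homOfLE h)
  | .l a, .r _, h => X.inter.φ a ≫ X.G.map (homOfLE h)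
  | .r a, .l _, h => X.inter.ψ a ≫ X.F.map (homOfLE h)

/-- The interleaving with the roles of the two diagrams exchanged. -/
def swap {ε : ℝ} {F G : ℝ ⥤ A} (I : Interleaving ε F G) : Interleaving ε G F where
  hε := I.hε
  φ := I.ψ
  ψ := I.φ
  natφ := I.natψ
  natψ := I.natφ
  triφ := I.triψ
  triψ := I.triφ

section Crossing

variable {δ : ℝ} {F G : ℝ ⥤ A} (I : Interleaving δ F G) {a b c : ℝ}

theorem map_comp_cross (h : a ≤ b) (k : b + δ ≤ c) (hk : a + δ ≤ c) :
    I.φ a ≫ G.map (homOfLE hk) = F.map (homOfLE h) ≫ I.φ b ≫ G.map (homOfLE k) := by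
  rw [← Category.assoc, I.natφ, Category.assoc, ← G.map_comp, homOfLE_comp]

theorem cross_comp_map (h : a + δ ≤ b) (k : b ≤ c) (hk : a + δ ≤ c) :
    I.φ a ≫ G.map (homOfLE hk) = (I.φ a ≫ G.map (homOfLE h)) ≫ G.map (homOfLE k) := by
  rw [Category.assoc, ← G.map_comp, homOfLE_comp]

theorem cross_comp_cross (h : a + δ ≤ b) (k : b + δ ≤ c) (hk : a ≤ c) :
    F.map (homOfLE hk) =
      (I.φ a ≫ G.map (homOfLE h)) ≫ I.ψ b ≫ F.map (homOfLE k) := by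
  rw [Category.assoc, ← Category.assoc (G.map _), I.natψ, Category.assoc, ← F.map_comp,
    ← Category.assoc, I.triφ, ← F.map_comp, homOfLE_comp, homOfLE_comp]

end Crossing

/-- Functoriality of the transition maps. Naturality of `φ` and `ψ` moves a crossing to the front;
crossing twice is handled by the triangle identities. -/
theorem diagMap_comp (X : InterObj (ε : ℝ) A) (p q s : Pt ε) (h : p ≤ q) (k : q ≤ s) :
    diagMap X p s (h.trans k) = diagMap X p q h ≫ diagMap X q s k := by
  have hk := h.trans k
  cases p <;> cases q <;> cases s
  · exact X.F.map_comp (homOfLE h) (homOfLE k)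
  · exact map_comp_cross X.inter h k hk
  · exact cross_comp_cross X.inter h k hk
  · exact cross_comp_map X.inter h k hk
  · exact cross_comp_map (swap X.inter) h k hk
  · exact cross_comp_cross (swap X.inter) h k hk
  · exact map_comp_cross (swap X.inter) h k hk
  · exact X.G.map_comp (homOfLE h) (homOfLE k)

/-- The diagram on the interleaving preorder associated with an interleaving. -/
def diag (X : InterObj (ε : ℝ) A) : Pt ε ⥤ A where
  obj := diagObj X
  map h := diagMap X _ _ (leOfHom h)
  map_id p := by
    cases p with
    | l a => exact X.F.map_id a
    | r a => exact X.G.map_id a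
  map_comp h k := diagMap_comp X _ _ _ (leOfHom h) (leOfHom k)

/-- `φ` of the interleaving recovered from `diag X` is `φ` of `X` followed by an identity. -/
theorem diag_φ (X : InterObj (ε : ℝ) A) (a : ℝ) :
    (toInter (diag X)).inter.φ a = X.inter.φ a := by
  exact (congrArg (X.inter.φ a ≫ ·) (X.G.map_id _)).trans (Category.comp_id _)

theorem diag_ψ (X : InterObj (ε : ℝ) A) (a : ℝ) :
    (toInter (diag X)).inter.ψ a = X.inter.ψ a := by
  exact (congrArg (X.inter.ψ a ≫ ·) (X.F.map_id _)).trans (Category.comp_id _)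

/-- An interleaving is recovered from its associated diagram, with identity components. -/
def recoverIso (X : InterObj (ε : ℝ) A) : toInter (diag X) ≅ X where
  hom :=
    { α := 𝟙 X.F
      β := 𝟙 X.G
      commφ := fun a => (Category.id_comp _).trans
        ((diag_φ X a).symm.trans (Category.comp_id _).symm)
      commψ := fun a => (Category.id_comp _).trans
        ((diag_ψ X a).symm.trans (Category.comp_id _).symm) }
  inv :=
    { α := 𝟙 X.F
      β := 𝟙 X.G
      commφ := fun a => (Category.id_comp _).trans
        ((diag_φ X a).trans (Category.comp_id _).symm)
      commψ := fun a => (Category.id_comp _).trans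
        ((diag_ψ X a).trans (Category.comp_id _).symm) }
  hom_inv_id := InterHom.ext (Category.id_comp (𝟙 X.F)) (Category.id_comp (𝟙 X.G))
  inv_hom_id := InterHom.ext (Category.id_comp (𝟙 X.F)) (Category.id_comp (𝟙 X.G))

instance : (compare ε A).EssSurj where
  mem_essImage X := ⟨diag X, ⟨recoverIso X⟩⟩

instance : (compare ε A).IsEquivalence where

end InterAbelian

/-- If `A` is an abelian category and `ε ≥ 0`, then the category `Inter_ε(A)` of
`ε`-interleavings is abelian. -/
theorem interCategory_abelian (ε : ℝ) (hε : 0 ≤ ε)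
    (A : Type u) [Category.{v} A] [Abelian A] :
    Nonempty (Abelian (InterObj ε A)) := by
  lift ε to NNReal using hε
  let E : InterObj (ε : ℝ) A ≌ (InterAbelian.Pt ε ⥤ A) :=
    (InterAbelian.compare ε A).asEquivalence.symm
  -- Addition of morphisms is defined so that `E.functor` becomes additive.
  let _ : Preadditive (InterObj (ε : ℝ) A) := Preadditive.ofFullyFaithful E.fullyFaithfulFunctor
  have : E.functor.Additive := E.fullyFaithfulFunctor.additive_ofFullyFaithful
  have : Limits.HasFiniteProducts (InterObj (ε : ℝ) A) :=
    ⟨fun _ => Adjunction.hasLimitsOfShape_of_equivalence E.functor⟩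
  exact ⟨abelianOfEquivalence E.functor⟩
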